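/- Let σ be a relational first-order language and let M and N be countable σ-structures that are H-equivalent. Then M is HH-homogeneous if and only if N is HH-homogeneous. -/

import Mathlib

open FirstOrder Language Structure

universe u v w

variable {L : FirstOrder.Language.{u, v}}

/-- `M` is HH-homogeneous: every homomorphism between finite substructures of `M`
extends to an endomorphism of `M`. -/
def IsHHHomogeneous (L : FirstOrder.Language.{u, v}) (M : Type w) [L.Structure M] : Prop :=
  ∀ (A B : L.Substructure M), (A : Set M).Finite → (B : Set M).Finite →
    ∀ f : A →[L] B, ∃ g : M →[L] M, ∀ a : A, g (a : M) = (f a : M)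

/-- Every embedding from a finite substructure of `M` into `N` extends to a
homomorphism `M → N`. -/
def HomExtendable (L : FirstOrder.Language.{u, v}) (M N : Type w)
    [L.Structure M] [L.Structure N] : Prop :=
  ∀ A : L.Substructure M, (A : Set M).Finite →
    ∀ f : A ↪[L] N, ∃ g : M →[L] N, ∀ a : A, g (a : M) = f a

/-! Let `A ≤ B` be finite substructures of `N` and `f : A → N` a homomorphism. Copy `B` into `M` by
an embedding `e` and `f(A)` into `M` by an embedding `d`. Homogeneity of `M` extends
`e(a) ↦ d(f a)` to an endomorphism `g` of `M`, the embedding `d⁻¹` of `d(f(A))` into `N` extends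
to a homomorphism `h : M → N`, and then `h ∘ g ∘ e : B → N` extends `f`. So every element of `N`
can be added to the domain of any finite partial endomorphism; as `N` is countable, some directed
family of them covers `N`, and its union is an endomorphism. -/

section Gluing

variable {M : Type*} {N : Type*} [L.Structure M] [L.Structure N]

/-- A homomorphism from a substructure of `M` to `N`. As for `LinearPMap`, the domain is bundled,
which makes extension of partial homomorphisms an order. -/
structure PartialHom (L : FirstOrder.Language.{u, v}) (M N : Type*)
    [L.Structure M] [L.Structure N] where
  dom : L.Substructure M
  toHom : dom →[L] N

instance : Preorder (PartialHom L M N) where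
  le P Q := P.dom ≤ Q.dom ∧ ∀ (x : P.dom) (y : Q.dom), (x : M) = y → P.toHom x = Q.toHom y
  le_refl P := ⟨le_rfl, fun _ _ h => congrArg P.toHom (Subtype.ext h)⟩
  le_trans _ _ _ h₁ h₂ := ⟨h₁.1.trans h₂.1, fun x _ hxz =>
    (h₁.2 x ⟨x, h₁.1 x.2⟩ rfl).trans (h₂.2 _ _ hxz)⟩

theorem PartialHom.exists_hom_of_directed {ι : Type*} [Nonempty ι] {P : ι → PartialHom L M N}
    (hP : Directed (· ≤ ·) P) (hcover : ∀ x, ∃ i, x ∈ (P i).dom) :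
    ∃ g : M →[L] N, ∀ i (x : (P i).dom), g x = (P i).toHom x := by
  choose i hi using hcover
  let g : M → N := fun x => (P (i x)).toHom ⟨x, hi x⟩
  have hg : ∀ j (x : (P j).dom), g x = (P j).toHom x := by
    intro j x
    obtain ⟨k, hik, hjk⟩ := hP (i x) j
    exact (hik.2 _ ⟨x, hjk.1 x.2⟩ rfl).trans (hjk.2 _ _ rfl).symm
  have hlift : ∀ {n} (x : Fin n → M),
      ∃ k, ∃ y : Fin n → (P k).dom, x = (↑) ∘ y ∧ g ∘ x = (P k).toHom ∘ y := by
    intro n x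
    obtain ⟨k, hk⟩ := hP.finite_le (fun m => i (x m))
    let y : Fin n → (P k).dom := fun m => ⟨x m, (hk m).1 (hi _)⟩
    exact ⟨k, y, rfl, funext fun m => hg k (y m)⟩
  refine ⟨⟨g, fun F x => ?_, fun R x hx => ?_⟩, hg⟩
  · obtain ⟨k, y, rfl, hgy⟩ := hlift x
    rw [hgy, ← (P k).toHom.map_fun, ← hg]
    exact congrArg g ((P k).dom.subtype.map_fun F y).symm
  · obtain ⟨k, y, rfl, hgy⟩ := hlift x
    rw [hgy]
    exact (P k).toHom.map_rel R y (((P k).dom.subtype.map_rel R y).1 hx)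

end Gluing

section FiniteExtension

/-- `M` is locally finite: every finite subset of `M` generates a finite substructure. -/
def IsLocallyFinite (L : FirstOrder.Language.{u, v}) (M : Type*) [L.Structure M] : Prop :=
  ∀ s : Set M, s.Finite → (Substructure.closure L s : Set M).Finite

theorem isLocallyFinite_of_isRelational [L.IsRelational] (M : Type*) [L.Structure M] :
    IsLocallyFinite L M := fun s hs => by
  rwa [Substructure.closure_eq_of_isRelational]

/-- Homomorphisms to `N` from finite substructures of `M` extend to all larger finite substructures
of `M`: the finitary counterpart of extending them to `M` itself. -/
def FiniteHomExtensionProperty (L : FirstOrder.Language.{u, v}) (M N : Type*)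
    [L.Structure M] [L.Structure N] : Prop :=
  ∀ (A B : L.Substructure M) (hAB : A ≤ B), (B : Set M).Finite →
    ∀ f : A →[L] N, ∃ g : B →[L] N, ∀ a : A, g (Substructure.inclusion hAB a) = f a

theorem FiniteHomExtensionProperty.exists_le_mem_dom {M N : Type*}
    [L.Structure M] [L.Structure N] (hMN : FiniteHomExtensionProperty L M N)
    (hM : IsLocallyFinite L M) {P : PartialHom L M N} (hP : (P.dom : Set M).Finite) (x : M) :
    ∃ Q : PartialHom L M N, (Q.dom : Set M).Finite ∧ x ∈ Q.dom ∧ P ≤ Q := by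
  let B := Substructure.closure L (insert x (P.dom : Set M))
  have hB : (B : Set M).Finite := hM _ (hP.insert x)
  have hxB : insert x (P.dom : Set M) ⊆ B := Substructure.subset_closure
  have hPB : P.dom ≤ B := (Set.subset_insert x _).trans hxB
  obtain ⟨g, hg⟩ := hMN P.dom B hPB hB P.toHom
  refine ⟨⟨B, g⟩, hB, hxB (Set.mem_insert x _), hPB, fun y z hyz => ?_⟩
  rw [← hg y]
  exact congrArg g (Subtype.ext hyz)

theorem FiniteHomExtensionProperty.exists_hom_extension {M N : Type*}
    [L.Structure M] [L.Structure N] [Countable M] (hMN : FiniteHomExtensionProperty L M N)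
    (hM : IsLocallyFinite L M) {A : L.Substructure M} (hA : (A : Set M).Finite) (f : A →[L] N) :
    ∃ g : M →[L] N, ∀ a : A, g a = f a := by
  let FinitePartialHom := {P : PartialHom L M N // (P.dom : Set M).Finite}
  let definedAt (x : M) : Order.Cofinal FinitePartialHom :=
    { carrier := {P | x ∈ P.1.dom}
      isCofinal := fun P => by
        obtain ⟨Q, hQ, hxQ, hPQ⟩ := hMN.exists_le_mem_dom hM P.2 x
        exact ⟨⟨Q, hQ⟩, hxQ, hPQ⟩ }
  have : Encodable M := Encodable.ofCountable M
  let start : FinitePartialHom := ⟨⟨A, f⟩, hA⟩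
  let I := Order.idealOfCofinals start definedAt
  have hstart : start ∈ I := Order.mem_idealOfCofinals start definedAt
  have : Nonempty I := ⟨start, hstart⟩
  have hcover : ∀ x, ∃ P : I, x ∈ P.1.1.dom := fun x =>
    let ⟨P, hxP, hPI⟩ := Order.cofinal_meets_idealOfCofinals start definedAt x
    ⟨⟨P, hPI⟩, hxP⟩
  have hdirected : Directed (· ≤ ·) fun P : I => P.1.1 := I.directed.directed_val
  obtain ⟨g, hg⟩ := PartialHom.exists_hom_of_directed hdirected hcover
  exact ⟨g, hg ⟨start, hstart⟩⟩

theorem FiniteHomExtensionProperty.isHHHomogeneous {M : Type w} [L.Structure M] [Countable M]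
    (hMM : FiniteHomExtensionProperty L M M) (hM : IsLocallyFinite L M) : IsHHHomogeneous L M :=
  fun _ B hA _ f => hMM.exists_hom_extension hM hA (B.subtype.toHom.comp f)

end FiniteExtension

section Transfer

variable {M N : Type w} [L.Structure M] [L.Structure N]

theorem IsHHHomogeneous.exists_hom_comp_embedding (hM : IsHHHomogeneous L M) {A B : Type*}
    [L.Structure A] [L.Structure B] [Finite A] [Finite B] (i : A ↪[L] M) (j : B ↪[L] M)
    (f : A →[L] B) : ∃ g : M →[L] M, ∀ a, g (i a) = j (f a) := by
  obtain ⟨g, hg⟩ := hM i.toHom.range j.toHom.range (Set.finite_range i) (Set.finite_range j)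
    (j.equivRange.toHom.comp (f.comp i.equivRange.symm.toHom))
  refine ⟨g, fun a => ?_⟩
  simpa using hg (i.equivRange a)

theorem HomExtendable.exists_hom_comp_embedding (hMN : HomExtendable L M N) {A : Type*}
    [L.Structure A] [Finite A] (i : A ↪[L] M) (j : A ↪[L] N) :
    ∃ h : M →[L] N, ∀ a, h (i a) = j a := by
  obtain ⟨h, hh⟩ := hMN i.toHom.range (Set.finite_range i)
    (j.comp i.equivRange.symm.toEmbedding)
  refine ⟨h, fun a => ?_⟩
  simpa using hh (i.equivRange a)

theorem IsHHHomogeneous.finiteHomExtensionProperty (hM : IsHHHomogeneous L M)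
    (hMN : HomExtendable L M N)
    (hage : ∀ A : L.Substructure N, (A : Set N).Finite → Nonempty (A ↪[L] M)) :
    FiniteHomExtensionProperty L N N := by
  intro A B hAB hB f
  have : Finite B := hB
  have : Finite A := hB.subset hAB
  have hR : (f.range : Set N).Finite := Set.finite_range f
  have : Finite f.range := hR
  obtain ⟨e⟩ := hage B hB
  obtain ⟨d⟩ := hage f.range hR
  let fRange : A →[L] f.range := f.codRestrict f.range f.mem_range_self
  obtain ⟨g, hg⟩ := hM.exists_hom_comp_embedding (e.comp (Substructure.inclusion hAB)) d fRange
  obtain ⟨h, hh⟩ := hMN.exists_hom_comp_embedding d f.range.subtype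
  refine ⟨h.comp (g.comp e.toHom), fun a => ?_⟩
  calc h (g (e (Substructure.inclusion hAB a))) = h (d (fRange a)) := congrArg h (hg a)
    _ = f a := hh (fRange a)

theorem IsHHHomogeneous.of_homExtendable [Countable N] (hM : IsHHHomogeneous L M)
    (hN : IsLocallyFinite L N) (hMN : HomExtendable L M N)
    (hage : ∀ A : L.Substructure N, (A : Set N).Finite → Nonempty (A ↪[L] M)) :
    IsHHHomogeneous L N :=
  (hM.finiteHomExtensionProperty hMN hage).isHHHomogeneous hN

end Transfer

theorem hh_homogeneous_iff_of_h_equivalent_general (L : FirstOrder.Language.{u, v})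
    (M N : Type w) [L.Structure M] [L.Structure N] [Countable M] [Countable N]
    (hM : IsLocallyFinite L M) (hN : IsLocallyFinite L N)
    (hage : ∀ (B : Type w) [L.Structure B], Finite B →
      (Nonempty (B ↪[L] M) ↔ Nonempty (B ↪[L] N)))
    (hMN : HomExtendable L M N) (hNM : HomExtendable L N M) :
    IsHHHomogeneous L M ↔ IsHHHomogeneous L N :=
  ⟨fun h => h.of_homExtendable hN hMN fun A hA => (hage A hA).2 ⟨A.subtype⟩,
    fun h => h.of_homExtendable hM hNM fun A hA => (hage A hA).1 ⟨A.subtype⟩⟩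

theorem hh_homogeneous_iff_of_h_equivalent (L : FirstOrder.Language.{u, v}) [L.IsRelational]
    (M N : Type w) [L.Structure M] [L.Structure N] [Countable M] [Countable N]
    (hage : ∀ (B : Type w) [L.Structure B], Finite B →
      (Nonempty (B ↪[L] M) ↔ Nonempty (B ↪[L] N)))
    (hMN : HomExtendable L M N) (hNM : HomExtendable L N M) :
    IsHHHomogeneous L M ↔ IsHHHomogeneous L N :=
  hh_homogeneous_iff_of_h_equivalent_general L M N (isLocallyFinite_of_isRelational M)
    (isLocallyFinite_of_isRelational N) hage hMN hNM
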